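/- arXiv:2512.18603 — 2 statements merged into one kernel-verified Lean document; each statement's English description precedes it below -/
import Mathlib

section
/- Let (Λ, Σ_Λ, ρ) be a probability space, let the settings range over i, j ∈ {1, 2} and the outcomes over a, b ∈ {−1, +1}, and let p_A(a | i, λ), p_B(b | j, λ) be measurable in λ, nonnegative, and satisfy Σ_{a ∈ {−1,+1}} p_A(a | i, λ) = 1 and Σ_{b ∈ {−1,+1}} p_B(b | j, λ) = 1 for every i, j, λ. Define the joint distribution p(a, b | i, j) = ∫_Λ p_A(a | i, λ) p_B(b | j, λ) dρ(λ) and the correlators E_{ij} = Σ_{a,b} a·b·p(a, b | i, j). Then |E₁₁ + E₁₂ + E₂₁ − E₂₂| ≤ 2. -/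
open MeasureTheory

/-! Conditionally on the hidden variable, outcomes on the two sides are independent, so each
correlator is the integral of a product of two conditional means, both valued in `[-1, 1]`. Since
`x * z + x * w + y * z - y * w = x * (z + w) + y * (z - w)` and `|z + w| + |z - w| ≤ 2`, the
CHSH combination of the conditional means is bounded by `2` pointwise. -/

section Algebra

variable {R : Type*} [CommRing R] [LinearOrder R] [IsStrictOrderedRing R]

theorem abs_add_add_abs_sub_le_two {z w : R} (hz : |z| ≤ 1) (hw : |w| ≤ 1) :
    |z + w| + |z - w| ≤ 2 := by
  rw [abs_le] at hz hw
  rcases abs_cases (z + w) with h | h <;> rcases abs_cases (z - w) with h' | h' <;> linarith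

theorem abs_chsh_le_two {x y z w : R} (hx : |x| ≤ 1) (hy : |y| ≤ 1) (hz : |z| ≤ 1)
    (hw : |w| ≤ 1) : |x * z + x * w + y * z - y * w| ≤ 2 :=
  calc |x * z + x * w + y * z - y * w| = |x * (z + w) + y * (z - w)| := by ring_nf
    _ ≤ |x| * |z + w| + |y| * |z - w| := by
        simpa only [abs_mul] using abs_add_le (x * (z + w)) (y * (z - w))
    _ ≤ |z + w| + |z - w| :=
        add_le_add (mul_le_of_le_one_left (abs_nonneg _) hx)
          (mul_le_of_le_one_left (abs_nonneg _) hy)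
    _ ≤ 2 := abs_add_add_abs_sub_le_two hz hw

end Algebra

section Integral

variable {Ω : Type*} [MeasurableSpace Ω] {μ : Measure Ω} [IsFiniteMeasure μ]

theorem integrable_mul_of_abs_le_one {f g : Ω → ℝ} (hf : AEStronglyMeasurable f μ)
    (hg : AEStronglyMeasurable g μ) (hf_le : ∀ᵐ x ∂μ, |f x| ≤ 1) (hg_le : ∀ᵐ x ∂μ, |g x| ≤ 1) :
    Integrable (fun x => f x * g x) μ := by
  refine .of_bound (hf.mul hg) 1 ?_
  filter_upwards [hf_le, hg_le] with x hfx hgx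
  simpa only [Real.norm_eq_abs, abs_mul] using mul_le_one₀ hfx (abs_nonneg _) hgx

theorem abs_integral_chsh_le {f f' g g' : Ω → ℝ}
    (hf : AEStronglyMeasurable f μ) (hf' : AEStronglyMeasurable f' μ)
    (hg : AEStronglyMeasurable g μ) (hg' : AEStronglyMeasurable g' μ)
    (hf_le : ∀ᵐ x ∂μ, |f x| ≤ 1) (hf'_le : ∀ᵐ x ∂μ, |f' x| ≤ 1)
    (hg_le : ∀ᵐ x ∂μ, |g x| ≤ 1) (hg'_le : ∀ᵐ x ∂μ, |g' x| ≤ 1) :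
    |(∫ x, f x * g x ∂μ) + (∫ x, f x * g' x ∂μ) + (∫ x, f' x * g x ∂μ) - ∫ x, f' x * g' x ∂μ|
      ≤ 2 * μ.real Set.univ := by
  have hfg := integrable_mul_of_abs_le_one hf hg hf_le hg_le
  have hfg' := integrable_mul_of_abs_le_one hf hg' hf_le hg'_le
  have hf'g := integrable_mul_of_abs_le_one hf' hg hf'_le hg_le
  have hf'g' := integrable_mul_of_abs_le_one hf' hg' hf'_le hg'_le
  rw [← integral_add' hfg hfg', ← integral_add' (hfg.add hfg') hf'g,
    ← integral_sub' ((hfg.add hfg').add hf'g) hf'g', ← Real.norm_eq_abs]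
  refine norm_integral_le_of_norm_le_const ?_
  filter_upwards [hf_le, hf'_le, hg_le, hg'_le] with x hfx hf'x hgx hg'x
  exact abs_chsh_le_two hfx hf'x hgx hg'x

end Integral

section Response

variable {Λ α β : Type*} [MeasurableSpace Λ]

/-- `q a lam` is, for almost every hidden state `lam`, the probability of the outcome `a` in the
finite set `s`; outcomes outside `s` are ignored. This is the local response of one party at a
fixed setting. -/
structure IsResponseFunction (s : Finset α) (q : α → Λ → ℝ) (ρ : Measure Λ) : Prop where
  aestronglyMeasurable : ∀ a ∈ s, AEStronglyMeasurable (q a) ρ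
  nonneg : ∀ᵐ lam ∂ρ, ∀ a ∈ s, 0 ≤ q a lam
  sum_eq_one : ∀ᵐ lam ∂ρ, ∑ a ∈ s, q a lam = 1

/-- The mean of the numerical outcome `u a` given the hidden state `lam`, for outcomes `a ∈ s`
distributed according to the response function `q`. -/
def conditionalMean (s : Finset α) (u : α → ℝ) (q : α → Λ → ℝ) (lam : Λ) : ℝ :=
  ∑ a ∈ s, u a * q a lam

/-- The correlator `∑ u(a) v(b) p(a, b)` of a Bell-local model at a fixed pair of settings, where
`p(a, b) = ∫ q(a | λ) r(b | λ) dρ(λ)` and the outcomes `a`, `b` carry numerical values `u a`,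
`v b`. -/
noncomputable def correlator (ρ : Measure Λ) (s : Finset α) (t : Finset β) (u : α → ℝ) (v : β → ℝ)
    (q : α → Λ → ℝ) (r : β → Λ → ℝ) : ℝ :=
  ∑ a ∈ s, ∑ b ∈ t, u a * v b * ∫ lam, q a lam * r b lam ∂ρ

variable {ρ : Measure Λ} {s : Finset α} {t : Finset β} {u : α → ℝ} {v : β → ℝ}
  {q q' : α → Λ → ℝ} {r r' : β → Λ → ℝ}

namespace IsResponseFunction

theorem ae_abs_le_one (hq : IsResponseFunction s q ρ) {a : α} (ha : a ∈ s) :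
    ∀ᵐ lam ∂ρ, |q a lam| ≤ 1 := by
  filter_upwards [hq.nonneg, hq.sum_eq_one] with lam h_nonneg h_sum
  rw [abs_of_nonneg (h_nonneg a ha), ← h_sum]
  exact Finset.single_le_sum h_nonneg ha

theorem aestronglyMeasurable_conditionalMean (hq : IsResponseFunction s q ρ) (u : α → ℝ) :
    AEStronglyMeasurable (conditionalMean s u q) ρ :=
  s.aestronglyMeasurable_fun_sum fun a ha => (hq.aestronglyMeasurable a ha).const_mul (u a)

theorem ae_abs_conditionalMean_le_one (hq : IsResponseFunction s q ρ)
    (hu : ∀ a ∈ s, |u a| ≤ 1) : ∀ᵐ lam ∂ρ, |conditionalMean s u q lam| ≤ 1 := by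
  filter_upwards [hq.nonneg, hq.sum_eq_one] with lam h_nonneg h_sum
  have h_mem : ∑ a ∈ s, q a lam • u a ∈ Set.Icc (-1 : ℝ) 1 :=
    (convex_Icc (-1) 1).sum_mem h_nonneg h_sum fun a ha => abs_le.mp (hu a ha)
  simpa only [conditionalMean, smul_eq_mul, mul_comm, Set.mem_Icc, ← abs_le] using h_mem

variable [IsFiniteMeasure ρ]

theorem correlator_eq_integral (hq : IsResponseFunction s q ρ) (hr : IsResponseFunction t r ρ) :
    correlator ρ s t u v q r =
      ∫ lam, conditionalMean s u q lam * conditionalMean t v r lam ∂ρ := by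
  have h_int : ∀ a ∈ s, ∀ b ∈ t, Integrable (fun lam => u a * v b * (q a lam * r b lam)) ρ :=
    fun a ha b hb =>
      (integrable_mul_of_abs_le_one (hq.aestronglyMeasurable a ha) (hr.aestronglyMeasurable b hb)
        (hq.ae_abs_le_one ha) (hr.ae_abs_le_one hb)).const_mul _
  calc correlator ρ s t u v q r
      = ∑ a ∈ s, ∑ b ∈ t, ∫ lam, u a * v b * (q a lam * r b lam) ∂ρ := by
        simp only [correlator, integral_const_mul]
    _ = ∫ lam, ∑ a ∈ s, ∑ b ∈ t, u a * v b * (q a lam * r b lam) ∂ρ := by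
        rw [integral_finsetSum s fun a ha => integrable_finsetSum t (h_int a ha)]
        exact Finset.sum_congr rfl fun a ha => (integral_finsetSum t (h_int a ha)).symm
    _ = ∫ lam, conditionalMean s u q lam * conditionalMean t v r lam ∂ρ := by
        simp only [conditionalMean, Finset.sum_mul_sum, mul_mul_mul_comm]

end IsResponseFunction

theorem chsh_bound_stochastic_hidden_variable_general [IsProbabilityMeasure ρ]
    (hu : ∀ a ∈ s, |u a| ≤ 1) (hv : ∀ b ∈ t, |v b| ≤ 1)
    (hq : IsResponseFunction s q ρ) (hq' : IsResponseFunction s q' ρ)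
    (hr : IsResponseFunction t r ρ) (hr' : IsResponseFunction t r' ρ) :
    |correlator ρ s t u v q r + correlator ρ s t u v q r' + correlator ρ s t u v q' r
      - correlator ρ s t u v q' r'| ≤ 2 := by
  rw [hq.correlator_eq_integral hr, hq.correlator_eq_integral hr',
    hq'.correlator_eq_integral hr, hq'.correlator_eq_integral hr']
  simpa only [probReal_univ, mul_one] using abs_integral_chsh_le
    (hq.aestronglyMeasurable_conditionalMean u) (hq'.aestronglyMeasurable_conditionalMean u)
    (hr.aestronglyMeasurable_conditionalMean v) (hr'.aestronglyMeasurable_conditionalMean v)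
    (hq.ae_abs_conditionalMean_le_one hu) (hq'.ae_abs_conditionalMean_le_one hu)
    (hr.ae_abs_conditionalMean_le_one hv) (hr'.ae_abs_conditionalMean_le_one hv)

end Response

/-- CHSH bound for stochastic Bell-local models: with response kernels
`p_A(a|i,λ)`, `p_B(b|j,λ)` (measurable in `λ`, nonnegative, normalized over
outcomes `a, b ∈ {-1, +1}`), the joint distribution
`p(a,b|i,j) = ∫ p_A(a|i,λ) p_B(b|j,λ) dρ(λ)` has correlators
`E i j = ∑_{a,b} a·b·p(a,b|i,j)` satisfying `|E₁₁ + E₁₂ + E₂₁ − E₂₂| ≤ 2`. -/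
theorem chsh_bound_stochastic_hidden_variable
    {Λ : Type*} [MeasurableSpace Λ] (ρ : Measure Λ) [IsProbabilityMeasure ρ]
    (pA pB : Fin 2 → ℤ → Λ → ℝ)
    (hA_meas : ∀ i a, Measurable (pA i a)) (hB_meas : ∀ j b, Measurable (pB j b))
    (hA_nonneg : ∀ i a lam, 0 ≤ pA i a lam) (hB_nonneg : ∀ j b lam, 0 ≤ pB j b lam)
    (hA_sum : ∀ i lam, ∑ a ∈ ({-1, 1} : Finset ℤ), pA i a lam = 1)
    (hB_sum : ∀ j lam, ∑ b ∈ ({-1, 1} : Finset ℤ), pB j b lam = 1)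
    (p : ℤ → ℤ → Fin 2 → Fin 2 → ℝ)
    (hp : ∀ a b i j, p a b i j = ∫ lam, pA i a lam * pB j b lam ∂ρ)
    (E : Fin 2 → Fin 2 → ℝ)
    (hE : ∀ i j, E i j =
      ∑ a ∈ ({-1, 1} : Finset ℤ), ∑ b ∈ ({-1, 1} : Finset ℤ),
        (a : ℝ) * (b : ℝ) * p a b i j) :
    |E 0 0 + E 0 1 + E 1 0 - E 1 1| ≤ 2 := by
  have hA (i) : IsResponseFunction {-1, 1} (pA i) ρ :=
    ⟨fun a _ => (hA_meas i a).aestronglyMeasurable, .of_forall fun lam a _ => hA_nonneg i a lam,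
      .of_forall (hA_sum i)⟩
  have hB (j) : IsResponseFunction {-1, 1} (pB j) ρ :=
    ⟨fun b _ => (hB_meas j b).aestronglyMeasurable, .of_forall fun lam b _ => hB_nonneg j b lam,
      .of_forall (hB_sum j)⟩
  have h_outcome : ∀ a ∈ ({-1, 1} : Finset ℤ), |(a : ℝ)| ≤ 1 := by simp
  have hE_correlator (i j) : E i j = correlator ρ {-1, 1} {-1, 1} (↑) (↑) (pA i) (pB j) := by
    simp only [hE, hp, correlator]
  simpa only [hE_correlator] using chsh_bound_stochastic_hidden_variable_general
    h_outcome h_outcome (hA 0) (hA 1) (hB 0) (hB 1)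
end

section
/- Fix τ > L > 0 and set x_A = (τ, −L) and x_B = (τ, L) in two-dimensional Minkowski space. Then for every v ∈ (0, 1), the point x_B is spacelike separated from Λ_v x_A: Q(Λ_v x_A − x_B) < 0. -/
/-- Minkowski quadratic form `Q(t, x) = t² − x²` on ℝ². -/
def Q (p : ℝ × ℝ) : ℝ := p.1 ^ 2 - p.2 ^ 2

/-- Lorentz factor `γ = (1 − v²)^(−1/2)`. -/
noncomputable def lorentzGamma (v : ℝ) : ℝ := 1 / Real.sqrt (1 - v ^ 2)

/-- Lorentz boost with velocity `v`: `Λ_v(t, x) = (γ(t − vx), γ(x − vt))`. -/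
noncomputable def boost (v : ℝ) (p : ℝ × ℝ) : ℝ × ℝ :=
  (lorentzGamma v * (p.1 - v * p.2), lorentzGamma v * (p.2 - v * p.1))

/-!
The map `R(t, x) = Λ_v(t, −x)`, a spatial reflection followed by a boost, is itself the Lorentz
reflection along a spacelike vector `n`. Hence `R p − p` is a multiple of `n` for every `p`, so it
is spacelike unless `p` is fixed by `R`. Since `x_A` is the spatial reflection of `x_B`, the
theorem only requires that `R` moves `x_B`, which is visible from the sign of the spatial
coordinate.
-/

theorem Q_smul (c : ℝ) (p : ℝ × ℝ) : Q (c • p) = c ^ 2 * Q p := by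
  simp only [Q, Prod.smul_fst, Prod.smul_snd, smul_eq_mul]
  ring

theorem Q_smul_neg_iff {n : ℝ × ℝ} (hn : Q n < 0) (c : ℝ) : Q (c • n) < 0 ↔ c • n ≠ 0 := by
  have hn₀ : n ≠ 0 := by
    rintro rfl
    simp [Q] at hn
  rw [Q_smul, ← neg_pos, ← mul_neg, mul_pos_iff_of_pos_right (neg_pos.2 hn), sq_pos_iff,
    smul_ne_zero_iff_left hn₀]

section Boost

variable {v : ℝ}

theorem one_sub_sq_pos (hv : v ∈ Set.Ioo (-1 : ℝ) 1) : 0 < 1 - v ^ 2 :=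
  sub_pos.2 <| (sq_lt_one_iff_abs_lt_one v).2 <| abs_lt.2 hv

theorem lorentzGamma_pos (hv : v ∈ Set.Ioo (-1 : ℝ) 1) : 0 < lorentzGamma v :=
  one_div_pos.2 <| Real.sqrt_pos.2 <| one_sub_sq_pos hv

theorem lorentzGamma_sq_mul_one_sub_sq (hv : v ∈ Set.Ioo (-1 : ℝ) 1) :
    lorentzGamma v ^ 2 * (1 - v ^ 2) = 1 := by
  have h : 0 < 1 - v ^ 2 := one_sub_sq_pos hv
  rw [lorentzGamma, div_pow, one_pow, Real.sq_sqrt h.le, one_div_mul_cancel h.ne']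

/-- The normal vector `n` of the Lorentz reflection `R(t, x) = Λ_v(t, −x)`, normalized as
`n = e − R e` for the spatial unit vector `e = (0, 1)`. -/
noncomputable def boostReflectionNormal (v : ℝ) : ℝ × ℝ :=
  (-(lorentzGamma v * v), 1 + lorentzGamma v)

theorem Q_boostReflectionNormal (hv : v ∈ Set.Ioo (-1 : ℝ) 1) :
    Q (boostReflectionNormal v) = -(2 * (1 + lorentzGamma v)) := by
  simp only [Q, boostReflectionNormal]
  linear_combination -lorentzGamma_sq_mul_one_sub_sq hv

theorem Q_boostReflectionNormal_neg (hv : v ∈ Set.Ioo (-1 : ℝ) 1) :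
    Q (boostReflectionNormal v) < 0 := by
  rw [Q_boostReflectionNormal hv]
  linarith [lorentzGamma_pos hv]

theorem boost_reflection_sub_self (hv : v ∈ Set.Ioo (-1 : ℝ) 1) (t x : ℝ) :
    boost v (t, -x) - (t, x) =
      -(lorentzGamma v * v * t / (1 + lorentzGamma v) + x) • boostReflectionNormal v := by
  have hγ : 1 + lorentzGamma v ≠ 0 := by linarith [lorentzGamma_pos hv]
  ext
  · simp only [boost, boostReflectionNormal, Prod.fst_sub, Prod.smul_fst, smul_eq_mul]
    field_simp
    linear_combination t * lorentzGamma_sq_mul_one_sub_sq hv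
  · simp only [boost, boostReflectionNormal, Prod.snd_sub, Prod.smul_snd, smul_eq_mul]
    field_simp
    ring

theorem boost_snd_neg_iff (hv : v ∈ Set.Ioo (-1 : ℝ) 1) (p : ℝ × ℝ) :
    (boost v p).2 < 0 ↔ p.2 < v * p.1 :=
  (smul_neg_iff_of_pos_left (lorentzGamma_pos hv)).trans sub_neg

theorem boost_reflection_ne_self {t x : ℝ} (hv : v ∈ Set.Ico (0 : ℝ) 1) (ht : 0 ≤ t) (hx : 0 < x) :
    boost v (t, -x) ≠ (t, x) := by
  intro h
  have hneg : (boost v (t, -x)).2 < 0 :=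
    (boost_snd_neg_iff ⟨neg_one_lt_zero.trans_le hv.1, hv.2⟩ _).2 <|
      (neg_neg_of_pos hx).trans_le (mul_nonneg hv.1 ht)
  rw [h] at hneg
  exact hneg.not_gt hx

end Boost

theorem boosted_xA_spacelike_from_xB_general (τ L : ℝ) {v : ℝ} (hv : v ∈ Set.Ioo (-1 : ℝ) 1) :
    Q (boost v (τ, -L) - (τ, L)) < 0 ↔ boost v (τ, -L) ≠ (τ, L) := by
  rw [← sub_ne_zero, boost_reflection_sub_self hv]
  exact Q_smul_neg_iff (Q_boostReflectionNormal_neg hv) _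

/-- With `x_A = (τ, −L)`, `x_B = (τ, L)` for `τ > L > 0`, the point `x_B`
is spacelike separated from `Λ_v x_A` for every `v ∈ (0, 1)`:
`Q(Λ_v x_A − x_B) < 0`. -/
theorem boosted_xA_spacelike_from_xB (τ L : ℝ) (hL : 0 < L) (hτL : L < τ)
    (v : ℝ) (hv : v ∈ Set.Ioo (0 : ℝ) 1) :
    Q (boost v (τ, -L) - (τ, L)) < 0 :=
  (boosted_xA_spacelike_from_xB_general τ L ⟨neg_one_lt_zero.trans hv.1, hv.2⟩).2
    (boost_reflection_ne_self ⟨hv.1.le, hv.2⟩ (hL.trans hτL).le hL)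
end
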